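/- For a subset C of the 24 candidate pairs, let Γ_C be the simple graph on the 14 vertices {T_1,…,T_8,S_1,…,S_6} whose edges are: all 12 cube edges, all 12 octahedron edges, and the pairs {T_i,S_j} with (i,j) ∈ C. Then among the graphs Γ_C for which every vertex of Γ_C has even degree, there are exactly 76 graph-isomorphism classes; one class (that of the full candidate set C) corresponds to the monohedral tiling B𝒪, and the remaining 75 classes correspond to the dihedral f-tilings whose prototiles are the Möbius triangle and the kite derived from B𝒪. -/

import Mathlib

open Matrix

attribute [local instance] Classical.propDecidable

/-- `τ = (2√2+1)/7`. -/
noncomputable def tau : ℝ := (2 * Real.sqrt 2 + 1) / 7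

/-- The 14 vertices: `pt 0,…,pt 7` are the cube points `T_1,…,T_8`; `pt 8,…,pt 13`
are the octahedron points `S_1,…,S_6`. -/
noncomputable def pt : Fin 14 → Fin 3 → ℝ :=
  ![tau • ![1, 1, 1], tau • ![-1, 1, 1], tau • ![-1, -1, 1], tau • ![1, -1, 1],
    tau • ![1, 1, -1], tau • ![-1, 1, -1], tau • ![-1, -1, -1], tau • ![1, -1, -1],
    ![0, 0, 1], ![1, 0, 0], ![0, 1, 0], ![-1, 0, 0], ![0, -1, 0], ![0, 0, -1]]

/-- The 12 cube edges: pairs `{T_i, T_k}` differing in exactly one coordinate. -/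
noncomputable def cubeEdges : Finset (Sym2 (Fin 14)) :=
  Finset.univ.filter fun e => ∃ u v : Fin 14, u.val < 8 ∧ v.val < 8 ∧ e = s(u, v) ∧
    (Finset.univ.filter fun c : Fin 3 => pt u c ≠ pt v c).card = 1

/-- The 12 octahedron edges: pairs `{S_j, S_l}` with `⟨S_j, S_l⟩ = 0`. -/
noncomputable def octEdges : Finset (Sym2 (Fin 14)) :=
  Finset.univ.filter fun e => ∃ u v : Fin 14, 8 ≤ u.val ∧ 8 ≤ v.val ∧ e = s(u, v) ∧
    pt u ⬝ᵥ pt v = 0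

/-- The 24 candidate pairs `(T_i, S_j)` with `⟨T_i, S_j⟩ > 0`. -/
noncomputable def cand : Finset (Fin 14 × Fin 14) :=
  Finset.univ.filter fun p => p.1.val < 8 ∧ 8 ≤ p.2.val ∧ 0 < pt p.1 ⬝ᵥ pt p.2

/-- The simple graph `Γ_C` on the 14 vertices whose edges are the 12 cube edges, the
12 octahedron edges, and the pairs `{T_i, S_j}` with `(i, j) ∈ C`. -/
noncomputable def Γ (C : Finset (Fin 14 × Fin 14)) : SimpleGraph (Fin 14) :=
  SimpleGraph.fromEdgeSet ↑(cubeEdges ∪ octEdges ∪ C.image fun p => s(p.1, p.2))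

/-- `C` is a subset of the candidate pairs for which every vertex of `Γ_C` has even
degree. -/
noncomputable def Good (C : Finset (Fin 14 × Fin 14)) : Prop :=
  C ⊆ cand ∧ ∀ v : Fin 14, Even ((Γ C).degree v)

/-- Graph isomorphism between `Γ_C` and `Γ_{C'}`. -/
noncomputable def isoRel (C C' : {C : Finset (Fin 14 × Fin 14) // Good C}) : Prop :=
  Nonempty (Γ C.1 ≃g Γ C'.1)

/-!
The candidate pairs are the 24 edges of a rhombic dodecahedron whose rhombi correspond to the cube
edges. For `C = cand` all degrees are even, so in general they are even exactly when the candidate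
pairs outside `C` form a cycle modulo 2 on the surface of this polyhedron. Since that surface is a
sphere, such a cycle is the common boundary of the two colour classes of a 2-colouring of the 12
rhombi, and `C` consists of the edges between two rhombi of the same colour. Up to the symmetries
of the polyhedron and exchange of the colours, 76 of the `2 ^ 12` colourings cover all of them, and
the numbers of closed walks of length 4 at the vertices distinguish the 76 graphs.
-/

-- Re-registers `propDecidable` at low priority, so that `decide` finds the computable instances.
open scoped Classical

section General

theorem card_quot_eq_of_invariant {α β ι : Type*} {r : α → α → Prop} (rep : ι → α) (f : α → β)
    (hf : ∀ a b, r a b → f a = f b) (hinj : Function.Injective (f ∘ rep))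
    (hrep : ∀ a, ∃ i, r a (rep i)) : Nat.card (Quot r) = Nat.card ι := by
  refine (Nat.card_eq_of_bijective (fun i => Quot.mk r (rep i)) ⟨fun i j hij => ?_, ?_⟩).symm
  · exact hinj (congrArg (Quot.lift f hf) hij)
  · rintro ⟨a⟩
    obtain ⟨i, hi⟩ := hrep a
    exact ⟨i, (Quot.sound hi).symm⟩

variable {V W : Type*} [Fintype V] [Fintype W]

/-- The sum over all vertices of the square of the number of closed walks of length 4 at that
vertex; these walks are counted by the squares of the numbers of common neighbours. -/
def closedWalkEnergy (G : SimpleGraph V) [DecidableRel G.Adj] : ℕ :=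
  ∑ u, (∑ v, ((Finset.univ.filter (G.Adj u)).filter (G.Adj v)).card ^ 2) ^ 2

theorem closedWalkEnergy_eq_of_iso {G : SimpleGraph V} {H : SimpleGraph W} [DecidableRel G.Adj]
    [DecidableRel H.Adj] (e : G ≃g H) : closedWalkEnergy G = closedWalkEnergy H := by
  have card_common (u v : V) : ((Finset.univ.filter (G.Adj u)).filter (G.Adj v)).card =
      ((Finset.univ.filter (H.Adj (e u))).filter (H.Adj (e v))).card :=
    Finset.card_equiv e.toEquiv fun w => by simp [e.map_adj_iff]
  simp only [closedWalkEnergy, card_common]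
  refine Fintype.sum_equiv e.toEquiv _ _ fun u => congrArg (· ^ 2) ?_
  exact Fintype.sum_equiv e.toEquiv _ _ fun v => rfl

/-- The members of `l` as the positions of the binary digits `1` of a single number. -/
def bitSet (l : List ℕ) : ℕ := l.foldr (2 ^ · ||| ·) 0

theorem testBit_bitSet (l : List ℕ) (i : ℕ) : (bitSet l).testBit i = true ↔ i ∈ l := by
  induction l with
  | nil => simp [bitSet]
  | cons m l ih =>
    rw [List.mem_cons, ← ih, bitSet, List.foldr_cons, ← bitSet, Nat.testBit_or, Bool.or_eq_true,
      Nat.testBit_two_pow, decide_eq_true_eq, eq_comm]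

end General

section Coordinates

/-- The vertices rescaled to integer coordinates. -/
def intPt : Fin 14 → Fin 3 → ℤ :=
  ![![1, 1, 1], ![-1, 1, 1], ![-1, -1, 1], ![1, -1, 1],
    ![1, 1, -1], ![-1, 1, -1], ![-1, -1, -1], ![1, -1, -1],
    ![0, 0, 1], ![1, 0, 0], ![0, 1, 0], ![-1, 0, 0], ![0, -1, 0], ![0, 0, -1]]

/-- The factor by which a vertex differs from its rescaling `intPt`. -/
noncomputable def scale (u : Fin 14) : ℝ := if u.val < 8 then tau else 1

theorem scale_pos (u : Fin 14) : 0 < scale u := by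
  unfold scale tau
  split_ifs <;> positivity

theorem pt_eq_scale_mul_intPt (u : Fin 14) (c : Fin 3) : pt u c = scale u * intPt u c := by
  fin_cases u <;> fin_cases c <;> simp [pt, scale, intPt]

theorem pt_dotProduct_pt (u v : Fin 14) :
    pt u ⬝ᵥ pt v = scale u * scale v * ((intPt u ⬝ᵥ intPt v : ℤ) : ℝ) := by
  simp only [dotProduct, Fin.sum_univ_three, pt_eq_scale_mul_intPt]
  push_cast
  ring

theorem pt_dotProduct_pt_eq_zero_iff (u v : Fin 14) :
    pt u ⬝ᵥ pt v = 0 ↔ intPt u ⬝ᵥ intPt v = 0 := by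
  simp [pt_dotProduct_pt, (scale_pos u).ne', (scale_pos v).ne']

theorem pt_dotProduct_pt_pos_iff (u v : Fin 14) :
    0 < pt u ⬝ᵥ pt v ↔ 0 < intPt u ⬝ᵥ intPt v := by
  rw [pt_dotProduct_pt, mul_pos_iff_of_pos_left (mul_pos (scale_pos u) (scale_pos v)),
    Int.cast_pos]

theorem pt_apply_eq_iff {u v : Fin 14} (hu : u.val < 8) (hv : v.val < 8) (c : Fin 3) :
    pt u c = pt v c ↔ intPt u c = intPt v c := by
  have tau_ne_zero : tau ≠ 0 := by simpa [scale] using (scale_pos 0).ne'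
  simp [pt_eq_scale_mul_intPt, scale, hu, hv, tau_ne_zero]

-- For sign vectors in dimension 3, `⟨x, y⟩ = 3 - 2 * #{c | x c ≠ y c}`.
theorem card_pt_ne_eq_one_iff {u v : Fin 14} (hu : u.val < 8) (hv : v.val < 8) :
    (Finset.univ.filter fun c => pt u c ≠ pt v c).card = 1 ↔ intPt u ⬝ᵥ intPt v = 1 := by
  have sign_vectors : ∀ u v : Fin 14, u.val < 8 → v.val < 8 →
      ((Finset.univ.filter fun c => intPt u c ≠ intPt v c).card = 1 ↔
        intPt u ⬝ᵥ intPt v = 1) := by decide +kernel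
  simp only [ne_eq, pt_apply_eq_iff hu hv]
  convert sign_vectors u v hu hv

/-- Adjacency by a cube edge or an octahedron edge. -/
def SkeletonAdj (u v : Fin 14) : Prop :=
  (u.val < 8 ∧ v.val < 8 ∧ intPt u ⬝ᵥ intPt v = 1) ∨
    (8 ≤ u.val ∧ 8 ≤ v.val ∧ intPt u ⬝ᵥ intPt v = 0)

/-- The candidate pairs, as a relation between vertices. -/
def IsCandidate (t s : Fin 14) : Prop :=
  t.val < 8 ∧ 8 ≤ s.val ∧ 0 < intPt t ⬝ᵥ intPt s

instance : DecidableRel SkeletonAdj := fun u v => by unfold SkeletonAdj; infer_instance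

instance : DecidableRel IsCandidate := fun t s => by unfold IsCandidate; infer_instance

theorem mem_cubeEdges_iff (u v : Fin 14) :
    s(u, v) ∈ cubeEdges ↔ u.val < 8 ∧ v.val < 8 ∧ intPt u ⬝ᵥ intPt v = 1 := by
  simp only [cubeEdges, Finset.mem_filter, Finset.mem_univ, true_and]
  constructor
  · rintro ⟨a, b, ha, hb, hab, hcard⟩
    have hdot : intPt a ⬝ᵥ intPt b = 1 := (card_pt_ne_eq_one_iff ha hb).1 (by convert hcard)
    rcases Sym2.eq_iff.1 hab with ⟨rfl, rfl⟩ | ⟨rfl, rfl⟩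
    · exact ⟨ha, hb, hdot⟩
    · exact ⟨hb, ha, dotProduct_comm (intPt u) _ ▸ hdot⟩
  · rintro ⟨hu, hv, hdot⟩
    exact ⟨u, v, hu, hv, rfl, by convert (card_pt_ne_eq_one_iff hu hv).2 hdot⟩

theorem mem_octEdges_iff (u v : Fin 14) :
    s(u, v) ∈ octEdges ↔ 8 ≤ u.val ∧ 8 ≤ v.val ∧ intPt u ⬝ᵥ intPt v = 0 := by
  simp only [octEdges, Finset.mem_filter, Finset.mem_univ, true_and, pt_dotProduct_pt_eq_zero_iff]
  constructor
  · rintro ⟨a, b, ha, hb, hab, hdot⟩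
    rcases Sym2.eq_iff.1 hab with ⟨rfl, rfl⟩ | ⟨rfl, rfl⟩
    · exact ⟨ha, hb, hdot⟩
    · exact ⟨hb, ha, dotProduct_comm (intPt u) _ ▸ hdot⟩
  · rintro ⟨hu, hv, hdot⟩
    exact ⟨u, v, hu, hv, rfl, hdot⟩

theorem mem_cand_iff {t s : Fin 14} : (t, s) ∈ cand ↔ IsCandidate t s := by
  simp only [cand, Finset.mem_filter, Finset.mem_univ, true_and, IsCandidate,
    pt_dotProduct_pt_pos_iff]

theorem skeletonAdj_symm {u v : Fin 14} (h : SkeletonAdj u v) : SkeletonAdj v u := by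
  simpa only [SkeletonAdj, dotProduct_comm (intPt v), and_left_comm] using h

theorem not_skeletonAdj_self (v : Fin 14) : ¬SkeletonAdj v v := by
  revert v
  decide +kernel

theorem not_isCandidate_self (v : Fin 14) : ¬IsCandidate v v :=
  fun h => h.1.not_ge h.2.1

theorem Γ_adj_iff {C : Finset (Fin 14 × Fin 14)} (hC : C ⊆ cand) (u v : Fin 14) :
    (Γ C).Adj u v ↔ SkeletonAdj u v ∨ (u, v) ∈ C ∨ (v, u) ∈ C := by
  have ne_of_adj (h : SkeletonAdj u v ∨ (u, v) ∈ C ∨ (v, u) ∈ C) : u ≠ v := by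
    rintro rfl
    have hCuu : (u, u) ∉ C := fun h => not_isCandidate_self u (mem_cand_iff.1 (hC h))
    simp only [not_skeletonAdj_self, hCuu, or_self] at h
  have mem_image : s(u, v) ∈ C.image (fun p => s(p.1, p.2)) ↔ (u, v) ∈ C ∨ (v, u) ∈ C := by
    simp only [Finset.mem_image, Prod.exists, Sym2.eq_iff]
    aesop
  rw [Γ, SimpleGraph.fromEdgeSet_adj, Finset.mem_coe, Finset.mem_union, Finset.mem_union,
    mem_cubeEdges_iff, mem_octEdges_iff, ← SkeletonAdj]
  convert and_iff_left_of_imp ne_of_adj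

end Coordinates

section Colourings

/-- The coordinate direction of an octahedron point, with value `0` at cube points. -/
def axis : Fin 14 → Fin 3 := ![0, 0, 0, 0, 0, 0, 0, 0, 2, 0, 1, 0, 1, 2]

/-- The rhombic dodecahedron whose 14 vertices are the cube and octahedron points and whose 24
edges are the candidate pairs has one rhombus for each cube edge. This is the rhombus of the cube
edge at the cube point `t` in direction `a`; the signs of the other two coordinates of `t` number
the four rhombi of a given direction. -/
def rhombus (t : Fin 14) (a : Fin 3) : Fin 12 :=
  Fin.ofNat 12 (4 * a + 2 * (if intPt t (a + 1) < 0 then 1 else 0) +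
    (if intPt t (a + 2) < 0 then 1 else 0))

/-- One of the two rhombi sharing the edge `(t, s)`. -/
def leftRhombus (t s : Fin 14) : Fin 12 := rhombus t (axis s + 1)

/-- The other of the two rhombi sharing the edge `(t, s)`. -/
def rightRhombus (t s : Fin 14) : Fin 12 := rhombus t (axis s + 2)

/-- The boundary modulo 2 of the chain `d` of edges of the rhombic dodecahedron. -/
def boundary (d : Fin 14 → Fin 14 → ZMod 2) (v : Fin 14) : ZMod 2 :=
  ∑ u with IsCandidate v u, d v u + ∑ u with IsCandidate u v, d u v

theorem boundary_eq (d : Fin 14 → Fin 14 → ZMod 2) : boundary d =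
    ![d 0 8 + d 0 9 + d 0 10, d 1 8 + d 1 10 + d 1 11, d 2 8 + d 2 11 + d 2 12,
    d 3 8 + d 3 9 + d 3 12, d 4 9 + d 4 10 + d 4 13, d 5 10 + d 5 11 + d 5 13,
    d 6 11 + d 6 12 + d 6 13, d 7 9 + d 7 12 + d 7 13, d 0 8 + d 1 8 + d 2 8 + d 3 8,
    d 0 9 + d 3 9 + d 4 9 + d 7 9, d 0 10 + d 1 10 + d 4 10 + d 5 10,
    d 1 11 + d 2 11 + d 5 11 + d 6 11, d 2 12 + d 3 12 + d 6 12 + d 7 12,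
    d 4 13 + d 5 13 + d 6 13 + d 7 13] := by
  ext v
  fin_cases v <;>
    simp [boundary, Finset.sum_filter, Fin.sum_univ_succ, IsCandidate, intPt, add_assoc]

theorem boundary_congr {d d' : Fin 14 → Fin 14 → ZMod 2}
    (h : ∀ t s, IsCandidate t s → d t s = d' t s) : boundary d = boundary d' := by
  ext v
  unfold boundary
  congr 1 <;> refine Finset.sum_congr rfl fun u hu => h _ _ (Finset.mem_filter.1 hu).2

/-- The sums of `d` along dual paths from rhombus `0`, each path crossing one edge of the rhombic
dodecahedron per summand. -/
def potential (d : Fin 14 → Fin 14 → ZMod 2) : Fin 12 → ZMod 2 :=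
  ![0, d 0 10 + d 4 10, d 0 8 + d 3 8, d 0 8 + d 3 9 + d 7 12, d 0 8, d 1 8, d 0 10 + d 4 9,
    d 1 10 + d 5 11, d 0 10, d 0 8 + d 3 9, d 1 10, d 1 8 + d 2 11]

-- The vanishing of the boundary makes the sum around every vertex zero; the sphere being simply
-- connected, sums along dual paths depend only on the end points.
theorem eq_potential_add_potential {d : Fin 14 → Fin 14 → ZMod 2} (hd : ∀ v, boundary d v = 0)
    {t s : Fin 14} (hts : IsCandidate t s) :
    d t s = potential d (leftRhombus t s) + potential d (rightRhombus t s) := by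
  simp only [boundary_eq, Fin.forall_fin_succ, cons_val_zero, cons_val_succ, IsEmpty.forall_iff,
    and_true] at hd
  fin_cases t <;> fin_cases s <;> first
    | exact absurd hts (by decide)
    | simp [potential, leftRhombus, rightRhombus, rhombus, axis, intPt, -Nat.cast_one,
        -Fin.ofNat_eq_cast] <;> grind

-- Every rhombus at `v` has exactly two edges at `v`.
theorem even_card_edges_of_rhombus_at (v : Fin 14) (e : Fin 12) :
    ((Finset.univ.filter fun u => IsCandidate v u ∧ leftRhombus v u = e).card +
      (Finset.univ.filter fun u => IsCandidate v u ∧ rightRhombus v u = e).card +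
      ((Finset.univ.filter fun u => IsCandidate u v ∧ leftRhombus u v = e).card +
      (Finset.univ.filter fun u => IsCandidate u v ∧ rightRhombus u v = e).card) : ZMod 2) = 0 := by
  revert v e
  decide +kernel

theorem boundary_rhombi_eq_zero (z : Fin 12 → ZMod 2) (v : Fin 14) :
    boundary (fun t s => z (leftRhombus t s) + z (rightRhombus t s)) v = 0 := by
  have sum_by_rhombus (p : Fin 14 → Prop) [DecidablePred p] (r : Fin 14 → Fin 12) :
      ∑ u with p u, z (r u) =
        ∑ e, ((Finset.univ.filter fun u => p u ∧ r u = e).card : ZMod 2) * z e := by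
    rw [← Finset.sum_fiberwise _ r]
    refine Finset.sum_congr rfl fun e _ => ?_
    rw [Finset.sum_congr rfl fun u hu => congrArg z (Finset.mem_filter.1 hu).2,
      Finset.filter_filter, Finset.sum_const, nsmul_eq_mul]
  simp only [boundary, Finset.sum_add_distrib, sum_by_rhombus]
  simp only [← Finset.sum_add_distrib, ← add_mul]
  exact Finset.sum_eq_zero fun e _ => by rw [even_card_edges_of_rhombus_at, zero_mul]

/-- The candidate pairs outside `C`, as a chain of edges of the rhombic dodecahedron modulo 2. -/
noncomputable def defect (C : Finset (Fin 14 × Fin 14)) (t s : Fin 14) : ZMod 2 :=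
  if (t, s) ∈ C then 0 else 1

theorem sum_full_adj_eq_zero (v : Fin 14) :
    (∑ u, if SkeletonAdj v u ∨ IsCandidate v u ∨ IsCandidate u v then 1 else 0 : ZMod 2) = 0 := by
  revert v
  decide +kernel

theorem even_degree_iff_boundary_defect {C : Finset (Fin 14 × Fin 14)} (hC : C ⊆ cand)
    (v : Fin 14) : Even ((Γ C).degree v) ↔ boundary (defect C) v = 0 := by
  have adj_add_defect (u : Fin 14) : (if (Γ C).Adj v u then 1 else 0 : ZMod 2) +
      ((if IsCandidate v u then defect C v u else 0) +
        (if IsCandidate u v then defect C u v else 0)) =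
      if SkeletonAdj v u ∨ IsCandidate v u ∨ IsCandidate u v then 1 else 0 := by
    have hvu : (v, u) ∈ C → IsCandidate v u := fun h => mem_cand_iff.1 (hC h)
    have huv : (u, v) ∈ C → IsCandidate u v := fun h => mem_cand_iff.1 (hC h)
    rw [Γ_adj_iff hC]
    grind [SkeletonAdj, IsCandidate, defect]
  have degree_add_boundary : ((Γ C).degree v : ZMod 2) + boundary (defect C) v = 0 := by
    rw [← sum_full_adj_eq_zero v, ← Finset.sum_congr rfl fun u _ => adj_add_defect u,
      SimpleGraph.degree_eq_sum_if_adj, boundary, Finset.sum_filter, Finset.sum_filter,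
      ← Finset.sum_add_distrib, ← Finset.sum_add_distrib]
  rw [← ZMod.natCast_eq_zero_iff_even]
  constructor <;> intro h <;> simpa [h] using degree_add_boundary

/-- A candidate pair is monochrome for the colouring `y` of the rhombi when the two rhombi sharing
it have the same colour. -/
def IsMonochrome (y : Fin 12 → Bool) (t s : Fin 14) : Prop :=
  IsCandidate t s ∧ y (leftRhombus t s) = y (rightRhombus t s)

instance (y : Fin 12 → Bool) : DecidableRel (IsMonochrome y) := fun t s => by
  unfold IsMonochrome; infer_instance

/-- The candidate set of a colouring, playing the role of `C` in `Γ C`. -/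
def monochromePairs (y : Fin 12 → Bool) : Finset (Fin 14 × Fin 14) :=
  Finset.univ.filter fun p => IsMonochrome y p.1 p.2

theorem mem_monochromePairs {y : Fin 12 → Bool} {t s : Fin 14} :
    (t, s) ∈ monochromePairs y ↔ IsMonochrome y t s := by
  simp only [monochromePairs, Finset.mem_filter_univ]

theorem monochromePairs_subset_cand (y : Fin 12 → Bool) : monochromePairs y ⊆ cand :=
  fun _ h => mem_cand_iff.2 (mem_monochromePairs.1 h).1

theorem monochromePairs_const (b : Bool) : monochromePairs (fun _ => b) = cand := by
  ext ⟨t, s⟩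
  simp only [mem_monochromePairs, mem_cand_iff, IsMonochrome, and_true]

theorem good_monochromePairs (y : Fin 12 → Bool) : Good (monochromePairs y) := by
  refine ⟨monochromePairs_subset_cand y, fun v => ?_⟩
  rw [even_degree_iff_boundary_defect (monochromePairs_subset_cand y)]
  let z (e : Fin 12) : ZMod 2 := if y e then 1 else 0
  have defect_eq (t s : Fin 14) (hts : IsCandidate t s) :
      defect (monochromePairs y) t s = z (leftRhombus t s) + z (rightRhombus t s) := by
    have xor_eq_add : ∀ a b : Bool, (if a = b then 0 else 1 : ZMod 2) =
        (if a then 1 else 0) + (if b then 1 else 0) := by decide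
    simp only [defect, mem_monochromePairs, IsMonochrome, hts, true_and, xor_eq_add, z]
  rw [boundary_congr defect_eq, boundary_rhombi_eq_zero]

theorem exists_monochromePairs_eq {C : Finset (Fin 14 × Fin 14)} (hC : Good C) :
    ∃ y, monochromePairs y = C := by
  have boundary_eq_zero (v : Fin 14) : boundary (defect C) v = 0 :=
    (even_degree_iff_boundary_defect hC.1 v).1 (hC.2 v)
  let y (e : Fin 12) : Bool := potential (defect C) e = 1
  have mem_iff {t s : Fin 14} (hts : IsCandidate t s) :
      (t, s) ∈ C ↔ y (leftRhombus t s) = y (rightRhombus t s) := by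
    have add_eq_zero_iff_colour_eq : ∀ a b : ZMod 2,
        a + b = 0 ↔ decide (a = 1) = decide (b = 1) := by decide
    rw [← add_eq_zero_iff_colour_eq, ← eq_potential_add_potential boundary_eq_zero hts]
    simp [defect]
  refine ⟨y, ?_⟩
  ext ⟨t, s⟩
  rw [mem_monochromePairs]
  refine ⟨fun h => (mem_iff h.1).2 h.2, fun h => ?_⟩
  have hts : IsCandidate t s := mem_cand_iff.1 (hC.1 h)
  exact ⟨hts, (mem_iff hts).1 h⟩

end Colourings

section Symmetries

/-- The graph `Γ C` of the candidate set `C` of a colouring, with decidable adjacency. -/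
def colouredGraph (y : Fin 12 → Bool) : SimpleGraph (Fin 14) where
  Adj u v := SkeletonAdj u v ∨ IsMonochrome y u v ∨ IsMonochrome y v u
  symm := ⟨fun _ _ h => h.imp skeletonAdj_symm Or.symm⟩
  loopless := ⟨fun v h => by
    simp only [not_skeletonAdj_self, IsMonochrome, not_isCandidate_self, false_and, or_self] at h⟩

instance (y : Fin 12 → Bool) : DecidableRel (colouredGraph y).Adj := fun u v => by
  unfold colouredGraph; infer_instance

theorem Γ_monochromePairs (y : Fin 12 → Bool) : Γ (monochromePairs y) = colouredGraph y := by
  ext u v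
  rw [Γ_adj_iff (monochromePairs_subset_cand y), mem_monochromePairs, mem_monochromePairs]
  rfl

/-- A symmetry of the rhombic dodecahedron, given by its actions on vertices and on rhombi. -/
structure PolyhedralSymmetry where
  vertexMap : Equiv.Perm (Fin 14)
  rhombusMap : Fin 12 → Fin 12
  skeletonAdj_iff : ∀ u v, SkeletonAdj (vertexMap u) (vertexMap v) ↔ SkeletonAdj u v
  isCandidate_iff : ∀ t s, IsCandidate (vertexMap t) (vertexMap s) ↔ IsCandidate t s
  rhombi_eq : ∀ t s, IsCandidate t s →
    s(leftRhombus (vertexMap t) (vertexMap s), rightRhombus (vertexMap t) (vertexMap s)) =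
      s(rhombusMap (leftRhombus t s), rhombusMap (rightRhombus t s))

namespace PolyhedralSymmetry

/-- The rotary reflection `(x, y, z) ↦ (-z, -x, -y)`. -/
def rotaryReflection : PolyhedralSymmetry where
  vertexMap := c[0, 6] * c[1, 5, 4, 7, 3, 2] * c[8, 11, 10, 13, 9, 12]
  rhombusMap := ![7, 6, 5, 4, 11, 10, 9, 8, 3, 2, 1, 0]
  skeletonAdj_iff := by decide +kernel
  isCandidate_iff := by decide +kernel
  rhombi_eq := by decide +kernel

/-- The quarter turn `(x, y, z) ↦ (-y, x, z)`. -/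
def quarterTurn : PolyhedralSymmetry where
  vertexMap := c[0, 1, 2, 3] * c[4, 5, 6, 7] * c[9, 10, 11, 12]
  rhombusMap := ![5, 7, 4, 6, 0, 2, 1, 3, 10, 8, 11, 9]
  skeletonAdj_iff := by decide +kernel
  isCandidate_iff := by decide +kernel
  rhombi_eq := by decide +kernel

/-- The reflection `(x, y, z) ↦ (-x, y, z)`. -/
def mirror : PolyhedralSymmetry where
  vertexMap := c[0, 1] * c[2, 3] * c[4, 5] * c[6, 7] * c[9, 11]
  rhombusMap := ![0, 1, 2, 3, 5, 4, 7, 6, 10, 11, 8, 9]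
  skeletonAdj_iff := by decide +kernel
  isCandidate_iff := by decide +kernel
  rhombi_eq := by decide +kernel

theorem isMonochrome_iff (σ : PolyhedralSymmetry) (y : Fin 12 → Bool) (t s : Fin 14) :
    IsMonochrome y (σ.vertexMap t) (σ.vertexMap s) ↔ IsMonochrome (y ∘ σ.rhombusMap) t s := by
  rw [IsMonochrome, σ.isCandidate_iff, IsMonochrome]
  refine and_congr_right fun hts => ?_
  rcases Sym2.eq_iff.1 (σ.rhombi_eq t s hts) with ⟨hl, hr⟩ | ⟨hl, hr⟩
  · rw [hl, hr, Function.comp_apply, Function.comp_apply]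
  · rw [hl, hr, eq_comm, Function.comp_apply, Function.comp_apply]

/-- A symmetry carries the pulled back colouring to the original one. -/
def colouredGraphIso (σ : PolyhedralSymmetry) (y : Fin 12 → Bool) :
    colouredGraph (y ∘ σ.rhombusMap) ≃g colouredGraph y where
  toEquiv := σ.vertexMap
  map_rel_iff' := by simp [colouredGraph, σ.skeletonAdj_iff, σ.isMonochrome_iff]

end PolyhedralSymmetry

theorem colouredGraph_not_comp (y : Fin 12 → Bool) : colouredGraph (not ∘ y) = colouredGraph y := by
  ext u v
  simp [colouredGraph, IsMonochrome]

end Symmetries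

section Masks

/-- The colouring of the rhombi by the binary digits of `x`. -/
def ofMask (x : ℕ) (e : Fin 12) : Bool := x.testBit e

/-- The number whose binary digits are those of `x` pulled back along `π`. -/
def pullbackMask (π : Fin 12 → Fin 12) (x : ℕ) : ℕ := Nat.ofBits (ofMask x ∘ π)

theorem ofMask_pullbackMask (π : Fin 12 → Fin 12) (x : ℕ) :
    ofMask (pullbackMask π x) = ofMask x ∘ π := by
  ext e
  rw [ofMask, pullbackMask, Nat.testBit_ofBits_lt _ _ e.isLt]

theorem exists_ofMask_eq (y : Fin 12 → Bool) : ∃ x < 2 ^ 12, ofMask x = y :=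
  ⟨Nat.ofBits y, Nat.ofBits_lt_two_pow y, funext fun e => Nat.testBit_ofBits_lt _ _ e.isLt⟩

/-- The mask of the colouring with the two colours exchanged. -/
def complementMask (x : ℕ) : ℕ := x ^^^ (2 ^ 12 - 1)

theorem ofMask_complementMask (x : ℕ) : ofMask (complementMask x) = not ∘ ofMask x := by
  ext e
  simp [ofMask, complementMask, Nat.testBit_two_pow_sub_one, -Nat.reducePow, -Nat.reduceSub]

/-- The colourings of two masks have isomorphic coloured graphs. -/
def SameClass (x x' : ℕ) : Prop :=
  Nonempty (colouredGraph (ofMask x) ≃g colouredGraph (ofMask x'))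

theorem SameClass.refl (x : ℕ) : SameClass x x := ⟨SimpleGraph.Iso.refl⟩

theorem SameClass.trans {x x' x'' : ℕ} : SameClass x x' → SameClass x' x'' → SameClass x x'' :=
  fun ⟨e⟩ ⟨e'⟩ => ⟨e.trans e'⟩

theorem sameClass_pullbackMask (σ : PolyhedralSymmetry) (x : ℕ) :
    SameClass (pullbackMask σ.rhombusMap x) x := by
  rw [SameClass, ofMask_pullbackMask]
  exact ⟨σ.colouredGraphIso _⟩

theorem sameClass_complementMask (x : ℕ) : SameClass (complementMask x) x := by
  rw [SameClass, ofMask_complementMask, colouredGraph_not_comp]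
  exact ⟨SimpleGraph.Iso.refl⟩

/-- The first `n` iterates of `f` at the members of `l`. -/
def iterates (f : ℕ → ℕ) (n : ℕ) (l : List ℕ) : List ℕ := l.flatMap (List.iterate f · n)

theorem sameClass_of_mem_iterates {f : ℕ → ℕ} (hf : ∀ x, SameClass (f x) x) {n x x' : ℕ}
    {l : List ℕ} (hl : ∀ z ∈ l, SameClass z x) (hx' : x' ∈ iterates f n l) : SameClass x' x := by
  obtain ⟨z, hz, hiterate⟩ := List.mem_flatMap.1 hx'
  obtain ⟨m, -, rfl⟩ := List.mem_iterate.1 hiterate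
  clear hx' hiterate
  induction m with
  | zero => exact hl z hz
  | succ m ih => exact Function.iterate_succ_apply' f m z ▸ (hf _).trans ih

open PolyhedralSymmetry in
/-- The images of a mask under the 48 symmetries, with and without exchange of the colours. -/
def equivalentMasks (x : ℕ) : List ℕ :=
  iterates complementMask 2 <| iterates (pullbackMask rotaryReflection.rhombusMap) 6 <|
    iterates (pullbackMask quarterTurn.rhombusMap) 4 <|
      iterates (pullbackMask mirror.rhombusMap) 2 [x]

theorem sameClass_of_mem_equivalentMasks {x x' : ℕ} (hx' : x' ∈ equivalentMasks x) :
    SameClass x' x := by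
  refine sameClass_of_mem_iterates sameClass_complementMask (fun z hz => ?_) hx'
  refine sameClass_of_mem_iterates (sameClass_pullbackMask _) (fun z hz => ?_) hz
  refine sameClass_of_mem_iterates (sameClass_pullbackMask _) (fun z hz => ?_) hz
  refine sameClass_of_mem_iterates (sameClass_pullbackMask _) (fun z hz => ?_) hz
  exact List.mem_singleton.1 hz ▸ SameClass.refl x

/-- One mask for every isomorphism class, by increasing energy of the coloured graph. -/
def classMasks : List ℕ :=
  [58, 59, 123, 111, 826, 314, 428, 31, 63, 318, 302, 15, 934, 298, 315, 299, 316, 103, 119, 365,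
    364, 27, 87, 286, 296, 819, 313, 297, 359, 54, 102, 822, 295, 869, 361, 870, 358, 310, 55, 294,
    283, 317, 23, 1638, 26, 51, 86, 7, 348, 282, 83, 311, 279, 281, 342, 22, 307, 278, 280, 291, 19,
    854, 6, 821, 309, 339, 275, 18, 53, 274, 21, 3, 273, 17, 1, 0]

theorem bitSet_equivalentMasks_classMasks :
    bitSet (classMasks.flatMap equivalentMasks) = 2 ^ 2 ^ 12 - 1 := by
  decide +kernel

theorem exists_classMask_sameClass {x : ℕ} (hx : x < 2 ^ 12) : ∃ z ∈ classMasks, SameClass x z := by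
  have hmem : x ∈ classMasks.flatMap equivalentMasks := by
    rw [← testBit_bitSet, bitSet_equivalentMasks_classMasks, Nat.testBit_two_pow_sub_one]
    exact decide_eq_true hx
  obtain ⟨z, hz, hxz⟩ := List.mem_flatMap.1 hmem
  exact ⟨z, hz, sameClass_of_mem_equivalentMasks hxz⟩

theorem isChain_energy_classMasks :
    (classMasks.map fun x => closedWalkEnergy (colouredGraph (ofMask x))).IsChain (· < ·) := by
  decide +kernel

theorem closedWalkEnergy_injOn_classMasks {x x' : ℕ} (hx : x ∈ classMasks) (hx' : x' ∈ classMasks)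
    (h : closedWalkEnergy (colouredGraph (ofMask x)) =
      closedWalkEnergy (colouredGraph (ofMask x'))) : x = x' :=
  List.inj_on_of_nodup_map ((List.isChain_iff_pairwise.1 isChain_energy_classMasks).imp ne_of_lt)
    hx hx' h

theorem card_classMasks : Nat.card {x // x ∈ classMasks} = 76 :=
  Nat.subtype_card classMasks.toFinset fun _ => List.mem_toFinset

end Masks

/-- Among the graphs `Γ_C` with all degrees even there are exactly `76`
graph-isomorphism classes; the full candidate set satisfies the condition (its class
corresponds to the monohedral tiling `B𝒪`), and the remaining `75` classes correspond
to the dihedral f-tilings with prototiles the Möbius triangle and the kite derived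
from `B𝒪`. -/
theorem stmt_15 : Nat.card (Quot isoRel) = 76 ∧ Good cand := by
  refine ⟨?_, monochromePairs_const true ▸ good_monochromePairs _⟩
  let rep (x : {x // x ∈ classMasks}) : {C : Finset (Fin 14 × Fin 14) // Good C} :=
    ⟨monochromePairs (ofMask x), good_monochromePairs _⟩
  have energy_rep (x : {x // x ∈ classMasks}) :
      closedWalkEnergy (Γ (rep x).1) = closedWalkEnergy (colouredGraph (ofMask x)) :=
    closedWalkEnergy_eq_of_iso (Γ_monochromePairs _ ▸ SimpleGraph.Iso.refl)
  rw [← card_classMasks]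
  refine card_quot_eq_of_invariant rep (fun C => closedWalkEnergy (Γ C.1))
    (fun C C' ⟨e⟩ => closedWalkEnergy_eq_of_iso e) (fun x x' h => ?_) fun ⟨C, hC⟩ => ?_
  · simp only [Function.comp_apply, energy_rep] at h
    exact Subtype.ext (closedWalkEnergy_injOn_classMasks x.2 x'.2 h)
  · obtain ⟨y, rfl⟩ := exists_monochromePairs_eq hC
    obtain ⟨x, hx, rfl⟩ := exists_ofMask_eq y
    obtain ⟨z, hz, hxz⟩ := exists_classMask_sameClass hx
    refine ⟨⟨z, hz⟩, ?_⟩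
    rw [isoRel, Γ_monochromePairs, Γ_monochromePairs]
    exact hxz
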